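/- arXiv:math/0402241 — 5 statements merged into one kernel-verified Lean document; each statement's English description precedes it below -/
import Mathlib

section
/- Let G be a group and H a normal subgroup of G which is finitely generated and residually finite. Let H₁ be an abelian characteristic subgroup of finite index in H, and let Z be the centralizer of H₁ in H. Then G has a normal subgroup G' of finite index in G such that G' ∩ H is contained in the subgroup Z·H₁ generated by Z and H₁. -/
/-!
Since `H₁` is abelian, its centralizer `Z` contains `H₁`, so `H ⧸ Z` is finite. For `h ∉ Z` pick
`x ∈ H₁` with `h x h⁻¹ x⁻¹ ≠ 1`; the conjugate `h x h⁻¹` depends only on the coset `h Z`.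
By `exists_normal_conj_mul_inv_ne`, a finite-index normal subgroup of `G` contains no `g` with
`g x g⁻¹ x⁻¹ = h x h⁻¹ x⁻¹`, hence misses the coset `h Z`. Intersecting these subgroups
over the finitely many cosets gives `G'` with `G' ∩ H ⊆ Z`.
-/

theorem finite_monoidHom_of_fg (H Q : Type*) [Group H] [Group Q] [Finite Q] (hFG : Group.FG H) :
    Finite (H →* Q) := by
  obtain ⟨S, hS⟩ := Group.fg_def.1 hFG
  refine Finite.of_injective (fun (f : H →* Q) (s : S) => f s) fun f g hfg => ?_
  exact MonoidHom.eq_of_eqOn_dense hS fun s hs => congrFun hfg ⟨s, hs⟩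

/-- The subgroup is the kernel of the action of `G` on the finite set of homomorphisms `H →* H ⧸ N`,
where `N` is a finite-index normal subgroup missing `c`: an element of this kernel acts trivially
on `H ⧸ N` by conjugation, so all `g x g⁻¹ x⁻¹` lie in `N`. -/
theorem exists_normal_conj_mul_inv_ne {G : Type*} [Group G] (H : Subgroup G) [H.Normal]
    (hFG : Group.FG H)
    (hRF : ∀ h : H, h ≠ 1 → ∃ N : Subgroup H, N.Normal ∧ N.FiniteIndex ∧ h ∉ N)
    (c : H) (hc : c ≠ 1) :
    ∃ K : Subgroup G, K.Normal ∧ K.FiniteIndex ∧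
      ∀ g ∈ K, ∀ x : H, MulAut.conjNormal g x * x⁻¹ ≠ c := by
  obtain ⟨N, hN, hNf, hcN⟩ := hRF c hc
  have := finite_monoidHom_of_fg H (H ⧸ N) hFG
  let act : G →* Equiv.Perm (H →* H ⧸ N) := MonoidHom.toHomPerm
    { toFun := fun g φ => φ.comp (MulAut.conjNormal g⁻¹ : MulAut H).toMonoidHom
      map_one' := by
        refine funext fun φ => MonoidHom.ext fun x => ?_
        change φ (MulAut.conjNormal (1 : G)⁻¹ x) = φ x
        simp
      map_mul' := fun a b => by
        refine funext fun φ => MonoidHom.ext fun x => ?_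
        change φ (MulAut.conjNormal (a * b)⁻¹ x) =
          φ (MulAut.conjNormal b⁻¹ (MulAut.conjNormal a⁻¹ x))
        rw [mul_inv_rev, map_mul, MulAut.mul_apply] }
  refine ⟨act.ker, inferInstance, inferInstance, fun g hg x hx => hcN ?_⟩
  have h1 : act g⁻¹ (QuotientGroup.mk' N) = QuotientGroup.mk' N := by
    rw [MonoidHom.mem_ker.1 (inv_mem hg)]; rfl
  have h2 : QuotientGroup.mk' N (MulAut.conjNormal g⁻¹⁻¹ x) = QuotientGroup.mk' N x :=
    DFunLike.congr_fun h1 x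
  rw [inv_inv] at h2
  rw [← QuotientGroup.ker_mk' N, MonoidHom.mem_ker, ← hx, map_mul, map_inv, h2, mul_inv_cancel]

/-- Proposition 3.3.0(1), first assertion: if `H` is a finitely generated,
residually finite normal subgroup of `G`, and `H₁` is an abelian characteristic
subgroup of finite index in `H` with centralizer `Z` in `H`, then `G` has a
normal finite-index subgroup `G'` with `G' ∩ H ⊆ Z·H₁`. -/
theorem stmt0 (G : Type*) [Group G] (H : Subgroup G) [H.Normal]
    (hFG : Group.FG H)
    (hRF : ∀ h : H, h ≠ 1 → ∃ N : Subgroup H, N.Normal ∧ N.FiniteIndex ∧ h ∉ N)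
    (H₁ : Subgroup H) [H₁.Characteristic] [H₁.FiniteIndex]
    (hab : ∀ x ∈ H₁, ∀ y ∈ H₁, x * y = y * x) :
    ∃ G' : Subgroup G, G'.Normal ∧ G'.FiniteIndex ∧
      G' ⊓ H ≤ (Subgroup.centralizer (H₁ : Set H) ⊔ H₁).map H.subtype := by
  set Z := Subgroup.centralizer (H₁ : Set H) with hZ
  have hle : H₁ ≤ Z := fun x hx => Subgroup.mem_centralizer_iff.2 fun y hy => hab y hy x hx
  have : Z.FiniteIndex := Subgroup.finiteIndex_of_le hle
  have key : ∀ q : H ⧸ Z, ∃ K : Subgroup G, K.Normal ∧ K.FiniteIndex ∧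
      ∀ h : H, (h : H ⧸ Z) = q → (h : G) ∈ K → h ∈ Z := by
    intro q
    obtain ⟨h, rfl⟩ := QuotientGroup.mk_surjective q
    by_cases hh : h ∈ Z
    · refine ⟨⊤, inferInstance, inferInstance, fun k hk _ => ?_⟩
      have := Z.mul_mem hh (QuotientGroup.eq.1 hk.symm)
      simpa using this
    · obtain ⟨x, hx, hne⟩ : ∃ x ∈ H₁, x * h ≠ h * x := by
        by_contra! hcon
        exact hh (Subgroup.mem_centralizer_iff.2 hcon)
      obtain ⟨K, hK, hKf, hKc⟩ := exists_normal_conj_mul_inv_ne H hFG hRF (h * x * h⁻¹ * x⁻¹) (by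
        intro h1
        rw [mul_inv_eq_one, mul_inv_eq_iff_eq_mul] at h1
        exact hne h1.symm)
      refine ⟨K, hK, hKf, fun k hk hkK => (hKc k hkK x ?_).elim⟩
      -- `h` and `k` differ by an element of `Z`, so they conjugate `x` in the same way.
      have hz := Subgroup.mem_centralizer_iff.1 (QuotientGroup.eq.1 hk.symm) x hx
      have hconj : MulAut.conjNormal (k : G) x = k * x * k⁻¹ := by
        ext; simp
      rw [hconj, mul_left_inj, mul_inv_eq_iff_eq_mul]
      calc k * x = h * (h⁻¹ * k * x) := by group
        _ = h * (x * (h⁻¹ * k)) := by rw [hz]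
        _ = h * x * h⁻¹ * k := by group
  choose K hKn hKf hK using key
  refine ⟨⨅ q, K q, Subgroup.normal_iInf_normal hKn, Subgroup.finiteIndex_iInf hKf, ?_⟩
  rintro g ⟨hg, hgH⟩
  exact ⟨⟨g, hgH⟩, Subgroup.mem_sup_left (hK _ ⟨g, hgH⟩ rfl (Subgroup.mem_iInf.1 hg _)), rfl⟩
end

section
/- Let G be a group and H a normal subgroup of G which is finitely generated and residually finite. Let H₁ be an abelian characteristic subgroup of finite index in H, and let Z be the centralizer of H₁ in H. Then G has a normal subgroup G' of finite index in G such that G' ∩ H is contained in Z·H₁ and, moreover, for all x, y ∈ G' ∩ (Z·H₁), the commutator [x,y] = x y x⁻¹ y⁻¹ lies in G' ∩ H₁ (equivalently, the quotient group (G' ∩ Z·H₁)/(G' ∩ H₁) is abelian). -/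
/-- The action of `G` on homomorphisms out of a normal subgroup `H` by `g • f = f ∘ conj g⁻¹`. -/
def conjPrecomp {G : Type*} [Group G] (H : Subgroup G) [H.Normal] (Q : Type*) [Group Q] :
    G →* Equiv.Perm (H →* Q) :=
  MonoidHom.toHomPerm
    { toFun := fun g f => f.comp (MulAut.conjNormal g⁻¹ : MulAut H).toMonoidHom
      map_one' := by
        funext f
        ext h
        simp
        rfl
      map_mul' := fun a b => by
        funext f
        ext h
        simp
        rfl }

/-- A finite-index normal subgroup `N ≤ H₁` such that elements of `H` commuting with `H₁`
modulo `N` genuinely commute with `H₁`. -/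
theorem exists_normal_detecting_centralizer {H : Type*} [Group H]
    (hRF : ∀ h : H, h ≠ 1 → ∃ N : Subgroup H, N.Normal ∧ N.FiniteIndex ∧ h ∉ N)
    (H₁ : Subgroup H) [H₁.Normal] [H₁.FiniteIndex]
    (hab : ∀ x ∈ H₁, ∀ y ∈ H₁, x * y = y * x) :
    ∃ N : Subgroup H, N.Normal ∧ N.FiniteIndex ∧ N ≤ H₁ ∧
      ∀ h : H, (∀ a ∈ H₁, h * a * h⁻¹ * a⁻¹ ∈ N) → h ∈ Subgroup.centralizer (H₁ : Set H) := by
  have key : ∀ h : H, ∃ M : Subgroup H, M.Normal ∧ M.FiniteIndex ∧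
      ((∀ a ∈ H₁, h * a * h⁻¹ * a⁻¹ ∈ M) → h ∈ Subgroup.centralizer (H₁ : Set H)) := by
    intro h
    by_cases hz : h ∈ Subgroup.centralizer (H₁ : Set H)
    · exact ⟨⊤, inferInstance, inferInstance, fun _ => hz⟩
    · rw [Subgroup.mem_centralizer_iff] at hz
      push Not at hz
      obtain ⟨a, ha, hne⟩ := hz
      obtain ⟨M, hM, hfin, hmem⟩ := hRF (h * a * h⁻¹ * a⁻¹) fun h1 => hne (by
        rw [mul_inv_eq_one, mul_inv_eq_iff_eq_mul] at h1
        exact h1.symm)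
      exact ⟨M, hM, hfin, fun hall => absurd (hall a ha) hmem⟩
  choose M hMn hMf hM using key
  refine ⟨H₁ ⊓ ⨅ q : H ⧸ H₁, M q.out, ?_, ?_, inf_le_left, ?_⟩
  · have := Subgroup.normal_iInf_normal (a := fun q : H ⧸ H₁ => M q.out) fun q => hMn _
    infer_instance
  · have := Subgroup.finiteIndex_iInf (f := fun q : H ⧸ H₁ => M q.out) fun q => hMf _
    infer_instance
  · intro h hh
    obtain ⟨⟨b, hb⟩, hout⟩ := QuotientGroup.mk_out_eq_mul H₁ h
    simp only at hout
    have hbZ : b ∈ Subgroup.centralizer (H₁ : Set H) :=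
      Subgroup.mem_centralizer_iff.mpr fun a ha => hab a ha b hb
    have hz : (h : H ⧸ H₁).out ∈ Subgroup.centralizer (H₁ : Set H) := by
      refine hM _ fun a ha => ?_
      have h1 := Subgroup.mem_iInf.mp (hh a ha).2 (h : H ⧸ H₁)
      -- the commutator with `a` does not depend on the representative modulo `H₁`
      have h2 : (h : H ⧸ H₁).out * a * ((h : H ⧸ H₁).out)⁻¹ * a⁻¹ = h * a * h⁻¹ * a⁻¹ := by
        rw [hout, mul_assoc h b a, hab b hb a ha]
        group
      rw [h2]
      exact h1
    rw [hout] at hz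
    exact (Subgroup.mul_mem_cancel_right _ hbZ).mp hz

/-- Proposition 3.3.0(1), second assertion: in the setting of the first assertion,
`G'` may moreover be chosen so that all commutators of elements of `G' ∩ (Z·H₁)`
lie in `G' ∩ H₁`, i.e. the quotient `(G' ∩ Z·H₁)/(G' ∩ H₁)` is abelian. -/
theorem stmt1 (G : Type*) [Group G] (H : Subgroup G) [H.Normal]
    (hFG : Group.FG H)
    (hRF : ∀ h : H, h ≠ 1 → ∃ N : Subgroup H, N.Normal ∧ N.FiniteIndex ∧ h ∉ N)
    (H₁ : Subgroup H) [H₁.Characteristic] [H₁.FiniteIndex]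
    (hab : ∀ x ∈ H₁, ∀ y ∈ H₁, x * y = y * x) :
    ∃ G' : Subgroup G, G'.Normal ∧ G'.FiniteIndex ∧
      G' ⊓ H ≤ (Subgroup.centralizer (H₁ : Set H) ⊔ H₁).map H.subtype ∧
      ∀ x ∈ G' ⊓ (Subgroup.centralizer (H₁ : Set H) ⊔ H₁).map H.subtype,
        ∀ y ∈ G' ⊓ (Subgroup.centralizer (H₁ : Set H) ⊔ H₁).map H.subtype,
          x * y * x⁻¹ * y⁻¹ ∈ G' ⊓ H₁.map H.subtype := by
  obtain ⟨N, hNn, hNf, hNle, hN⟩ := exists_normal_detecting_centralizer hRF H₁ hab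
  have hfin : Finite (H →* H ⧸ N) := finite_monoidHom_of_fg H (H ⧸ N) hFG
  have hcent : ∀ h : H, (h : G) ∈ (conjPrecomp H (H ⧸ N)).ker →
      ∀ a : H, h * a * h⁻¹ * a⁻¹ ∈ N := by
    intro h hh a
    have h1 : conjPrecomp H (H ⧸ N) (h : G) (QuotientGroup.mk' N) = QuotientGroup.mk' N := by
      rw [MonoidHom.mem_ker.mp hh]
      rfl
    -- evaluating at `h * a * h⁻¹` undoes the conjugation by `h⁻¹` in the action
    have h2 := DFunLike.congr_fun h1 (h * a * h⁻¹)
    have h3 : (MulAut.conjNormal (h : G)⁻¹ : MulAut H) (h * a * h⁻¹) = a := by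
      ext
      simp [mul_assoc]
    change QuotientGroup.mk' N ((MulAut.conjNormal (h : G)⁻¹ : MulAut H) (h * a * h⁻¹)) = _ at h2
    rw [h3] at h2
    have h4 := QuotientGroup.eq.mp h2
    have h5 := hNn.conj_mem _ h4 a
    simpa [mul_assoc] using h5
  refine ⟨(conjPrecomp H (H ⧸ N)).ker, inferInstance, inferInstance, ?_, ?_⟩
  · rintro x ⟨hx, hxH⟩
    exact ⟨⟨x, hxH⟩, Subgroup.mem_sup_left (hN ⟨x, hxH⟩ fun a _ => hcent ⟨x, hxH⟩ hx a), rfl⟩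
  · rintro x ⟨hx, x', -, rfl⟩ y ⟨hy, y', -, rfl⟩
    refine ⟨Subgroup.mul_mem _ (Subgroup.mul_mem _ (Subgroup.mul_mem _ hx hy) (Subgroup.inv_mem _ hx))
      (Subgroup.inv_mem _ hy), ?_⟩
    exact ⟨x' * y' * x'⁻¹ * y'⁻¹, hNle (hcent x' hx y'), by simp⟩
end

section
/- Let G be a group and H a normal subgroup of G which is finitely generated and residually finite. Let H₁ be an abelian, torsion-free, characteristic subgroup of finite index in H. Then G has a normal subgroup G' of finite index in G such that G' ∩ H is abelian. -/
/-!
Write `A` for `H₁` viewed in `G`; it is normal in `G`, torsion-free abelian, finitely generated, and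
of finite index `k` in `H`. Let `P` be the subgroup of `3k`-th powers of elements of `A`. Then `H / P`
is finite, so the kernel `G'` of the conjugation action of `G` on `H / P` has finite index.

An element `h` of `K = G' ∩ H` acts on `A` with order dividing `k` and trivially modulo `3k`; by a
Minkowski-type argument (`eq_one_of_pow_eq_one_of_congr`) it acts trivially. Hence `A ∩ K` is central
in `K` and of finite index, so by the transfer into the centre every commutator of `K` has finite
order. These commutators lie in `P ≤ A`, which is torsion-free, so `K` is abelian.
-/

/-- A Minkowski-type rigidity statement: an endomorphism of a finitely generated torsion-free abelian
group with `φ ^ k = 1` and `φ ≡ 1` modulo `3 k` is the identity. The kernel `C` of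
`1 + φ + ⋯ + φ ^ (k - 1)` contains the range of `φ - 1`, and `C = 3 C`, so `C = 0` by Nakayama. -/
theorem eq_one_of_pow_eq_one_of_congr {M : Type*} [AddCommGroup M] [Module.Finite ℤ M]
    (htf : ∀ n : ℕ, 0 < n → ∀ x : M, n • x = 0 → x = 0)
    (φ : Module.End ℤ M) (k : ℕ) (hk : 0 < k) (hφ : φ ^ k = 1)
    (hcong : ∀ x, ∃ y, φ x - x = (3 * k) • y) : φ = 1 := by
  set S : Module.End ℤ M := ∑ i ∈ Finset.range k, φ ^ i with hS
  have hpow : ∀ i x, ∃ y, (φ ^ i) x - x = (3 * k) • y := by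
    intro i
    induction i with
    | zero => intro x; exact ⟨0, by simp⟩
    | succ i ih =>
      intro x
      obtain ⟨y, hy⟩ := ih (φ x)
      obtain ⟨z, hz⟩ := hcong x
      refine ⟨y + z, ?_⟩
      rw [smul_add, ← hy, ← hz, pow_succ, Module.End.mul_apply]
      abel
  have hle : LinearMap.ker S ≤ Ideal.span {(3 : ℤ)} • LinearMap.ker S := by
    intro c hc
    rw [LinearMap.mem_ker] at hc
    choose y hy using fun i => hpow i c
    -- `0 = S c = k c + 3 k ∑ yᵢ`, and `k` may be cancelled.
    have h1 : k • (c + 3 • ∑ i ∈ Finset.range k, y i) = 0 := by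
      have : S c = ∑ i ∈ Finset.range k, (c + (3 * k) • y i) := by
        rw [hS, LinearMap.sum_apply]
        refine Finset.sum_congr rfl fun i _ => ?_
        rw [← hy i]; abel
      rw [hc, Finset.sum_add_distrib, Finset.sum_const, Finset.card_range, ← Finset.smul_sum] at this
      rw [smul_add, smul_smul, mul_comm k 3, ← this]
    have h2 := htf k hk _ h1
    set w := ∑ i ∈ Finset.range k, y i
    have hc3 : c = (3 : ℤ) • (-w) := by
      rw [smul_neg, eq_neg_iff_add_eq_zero, ← h2]
      congr 1
      exact_mod_cast natCast_zsmul w 3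
    have hw : -w ∈ LinearMap.ker S := by
      rw [LinearMap.mem_ker]
      apply htf 3 (by norm_num)
      rw [hc3, map_zsmul] at hc
      rw [← hc]
      exact_mod_cast (natCast_zsmul (S (-w)) 3).symm
    rw [hc3]
    exact Submodule.smul_mem_smul (Ideal.mem_span_singleton_self _) hw
  obtain ⟨r, hr, hr0⟩ := Submodule.exists_sub_one_mem_and_smul_eq_zero_of_fg_of_le_smul
    (Ideal.span {(3 : ℤ)}) (LinearMap.ker S) (IsNoetherian.noetherian _) hle
  have hrne : r ≠ 0 := by
    rintro rfl
    rw [Ideal.mem_span_singleton] at hr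
    omega
  ext x
  have hx : φ x - x ∈ LinearMap.ker S := by
    have h := geom_sum_mul φ k
    rw [hφ, sub_self] at h
    rw [← hS] at h
    exact LinearMap.congr_fun h x
  have h0 := hr0 _ hx
  have h1 : r.natAbs • (φ x - x) = 0 := by
    rw [← natCast_zsmul]
    rcases Int.natAbs_eq r with h | h
    · rw [← h, h0]
    · rw [← neg_eq_zero, ← neg_smul, ← h, h0]
  exact sub_eq_zero.mp (htf _ (Int.natAbs_pos.mpr hrne) _ h1)

/-- `eq_one_of_pow_eq_one_of_congr` for the conjugation action of `h` on a normal subgroup `A`. -/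
theorem conj_trivial_of_congr {G : Type*} [Group G] (A : Subgroup G) [A.Normal]
    (hfg : A.FG) (hab : ∀ x ∈ A, ∀ y ∈ A, x * y = y * x)
    (htf : ∀ x ∈ A, ∀ n : ℕ, 0 < n → x ^ n = 1 → x = 1)
    (h : G) (k : ℕ) (hk : 0 < k) (hhk : h ^ k ∈ A)
    (hcong : ∀ a ∈ A, ∃ b ∈ A, h * a * h⁻¹ * a⁻¹ = b ^ (3 * k)) :
    ∀ a ∈ A, h * a = a * h := by
  let _ : CommGroup A :=
    { (inferInstance : Group A) with
      mul_comm := fun x y => Subtype.ext (hab x x.2 y y.2) }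
  have : Group.FG A := (Group.fg_iff_subgroup_fg A).mpr hfg
  have : Module.Finite ℤ (Additive A) :=
    Module.Finite.iff_addGroup_fg.mpr inferInstance
  let f : G →* Module.End ℤ (Additive A) :=
    { toFun := fun g => (MonoidHom.toAdditive
        (MulAut.conjNormal g : MulAut A).toMonoidHom).toIntLinearMap
      map_one' := by ext x; simp
      map_mul' := fun a b => by ext x; simp }
  have hf : ∀ g (a : A), ((f g (Additive.ofMul a)).toMul : G) = g * a * g⁻¹ := by
    intro g a
    exact MulAut.conjNormal_apply g a
  have h1 : f h = 1 := by
    apply eq_one_of_pow_eq_one_of_congr _ (f h) k hk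
    · rw [← map_pow]
      refine LinearMap.ext fun x => ?_
      apply Additive.toMul.injective
      apply Subtype.ext
      refine (hf (h ^ k) x.toMul).trans ?_
      rw [hab _ hhk _ x.toMul.2]
      simp
    · intro x
      obtain ⟨b, hb, e⟩ := hcong x.toMul x.toMul.2
      refine ⟨Additive.ofMul ⟨b, hb⟩, ?_⟩
      apply Additive.toMul.injective
      apply Subtype.ext
      have := hf h x.toMul
      simp only [ofMul_toMul] at this
      simp only [toMul_sub, toMul_nsmul, toMul_ofMul, Subgroup.coe_pow,
        div_eq_mul_inv, Subgroup.coe_mul, Subgroup.coe_inv]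
      rw [this, e]
    · intro n hn x hx
      apply Additive.toMul.injective
      apply Subtype.ext
      refine htf _ x.toMul.2 n hn ?_
      exact congrArg (fun z : Additive A => (z.toMul : G)) hx
  intro a ha
  have h2 := hf h ⟨a, ha⟩
  rw [h1] at h2
  have h3 : a = h * a * h⁻¹ := h2
  nth_rewrite 2 [h3]
  simp

/-- `P` is the subgroup of `m`-th powers of elements of `A`. -/
theorem exists_powers_subgroup {G : Type*} [Group G] (A : Subgroup G) [hA : A.Normal]
    (hfg : A.FG) (hab : ∀ x ∈ A, ∀ y ∈ A, x * y = y * x) (m : ℕ) (hm : 0 < m) :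
    ∃ P : Subgroup G, P.Normal ∧ P ≤ A ∧ P.relIndex A ≠ 0 ∧ ∀ x ∈ P, ∃ b ∈ A, x = b ^ m := by
  let _ : CommGroup A :=
    { (inferInstance : Group A) with
      mul_comm := fun x y => Subtype.ext (hab x x.2 y y.2) }
  have : Group.FG A := (Group.fg_iff_subgroup_fg A).mpr hfg
  let Q : Subgroup A := (powMonoidHom m : A →* A).range
  have hfin : Q.FiniteIndex := Subgroup.finiteIndex_range_powMonoidHom_of_fg A hm.ne'
  refine ⟨Q.map A.subtype, ⟨?_⟩, Subgroup.map_subtype_le _, ?_, ?_⟩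
  · rintro _ ⟨_, ⟨a, rfl⟩, rfl⟩ g
    refine ⟨_, ⟨⟨g * a * g⁻¹, hA.conj_mem _ a.2 g⟩, rfl⟩, ?_⟩
    change (g * a * g⁻¹) ^ m = g * (a : G) ^ m * g⁻¹
    exact conj_pow
  · have : (Q.map A.subtype).subgroupOf A = Q :=
      Subgroup.comap_map_eq_self_of_injective A.subtype_injective Q
    rw [Subgroup.relIndex, this]
    exact hfin.index_ne_zero
  · rintro _ ⟨_, ⟨a, rfl⟩, rfl⟩
    exact ⟨a, a.2, rfl⟩

/-- `G'` is the kernel of the conjugation action of `G` on `H / P`, whose automorphism group is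
finite. -/
theorem exists_finiteIndex_commutator_mem {G : Type*} [Group G] (H P : Subgroup G) [H.Normal]
    [P.Normal] (hfin : P.relIndex H ≠ 0) :
    ∃ G' : Subgroup G, G'.Normal ∧ G'.FiniteIndex ∧
      ∀ g ∈ G', ∀ x ∈ H, g * x * g⁻¹ * x⁻¹ ∈ P := by
  let π := QuotientGroup.mk' P
  have : (H.map π).Normal := Subgroup.Normal.map ‹_› π (QuotientGroup.mk'_surjective P)
  have : Finite (H.map π) := by
    apply Nat.finite_of_card_ne_zero
    rw [← Subgroup.relIndex_ker, QuotientGroup.ker_mk']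
    exact hfin
  let f : G →* MulAut (H.map π) := MulAut.conjNormal.comp π
  have : Finite (MulAut (H.map π)) := Finite.of_injective _ DFunLike.coe_injective
  refine ⟨f.ker, inferInstance, Subgroup.finiteIndex_ker f, ?_⟩
  intro g hg x hx
  have h1 : f g ⟨π x, Subgroup.mem_map_of_mem _ hx⟩ = ⟨π x, Subgroup.mem_map_of_mem _ hx⟩ := by
    rw [MonoidHom.mem_ker.mp hg]; rfl
  have h2 : π g * π x * (π g)⁻¹ = π x := by
    have := congrArg Subtype.val h1
    exact (MulAut.conjNormal_apply (π g) _).symm.trans this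
  rw [← QuotientGroup.ker_mk' P, MonoidHom.mem_ker]
  simp only [map_mul, map_inv]
  exact mul_inv_eq_one.mpr h2

/-- Proposition 3.3.0(2): if moreover `H₁` is torsion-free, then `G'` may be
chosen so that `G' ∩ H` is abelian. -/
theorem stmt2 (G : Type*) [Group G] (H : Subgroup G) [H.Normal]
    (hFG : Group.FG H)
    (hRF : ∀ h : H, h ≠ 1 → ∃ N : Subgroup H, N.Normal ∧ N.FiniteIndex ∧ h ∉ N)
    (H₁ : Subgroup H) [H₁.Characteristic] [H₁.FiniteIndex]
    (hab : ∀ x ∈ H₁, ∀ y ∈ H₁, x * y = y * x)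
    (htf : ∀ x ∈ H₁, ∀ n : ℕ, 0 < n → x ^ n = 1 → x = 1) :
    ∃ G' : Subgroup G, G'.Normal ∧ G'.FiniteIndex ∧
      ∀ x ∈ G' ⊓ H, ∀ y ∈ G' ⊓ H, x * y = y * x := by
  let A : Subgroup G := H₁.map H.subtype
  have hAn : A.Normal := inferInstance
  have hAH : A ≤ H := Subgroup.map_subtype_le _
  have hAfg : A.FG := by
    have h1 : Group.FG H₁ := inferInstance
    exact (Group.fg_iff_subgroup_fg A).mp (Group.fg_of_surjective
      (f := (H₁.equivMapOfInjective H.subtype H.subtype_injective).toMonoidHom)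
      (H₁.equivMapOfInjective H.subtype H.subtype_injective).surjective)
  have hAab : ∀ x ∈ A, ∀ y ∈ A, x * y = y * x := by
    rintro _ ⟨x, hx, rfl⟩ _ ⟨y, hy, rfl⟩
    rw [← map_mul, hab x hx y hy, map_mul]
  have hAtf : ∀ x ∈ A, ∀ n : ℕ, 0 < n → x ^ n = 1 → x = 1 := by
    rintro _ ⟨x, hx, rfl⟩ n hn h
    rw [htf x hx n hn (H.subtype_injective (by simpa using h)), map_one]
  have hsub : A.subgroupOf H = H₁ :=
    Subgroup.comap_map_eq_self_of_injective H.subtype_injective H₁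
  have hk : H₁.index ≠ 0 := Subgroup.FiniteIndex.index_ne_zero
  have hAk : A.relIndex H ≠ 0 := by rwa [Subgroup.relIndex, hsub]
  obtain ⟨P, hPn, hPA, hPi, hP⟩ := exists_powers_subgroup A hAfg hAab (3 * H₁.index) (by omega)
  have hPH : P.relIndex H ≠ 0 := by
    rw [← Subgroup.relIndex_mul_relIndex P A H hPA hAH]
    exact mul_ne_zero hPi hAk
  obtain ⟨G', hn, hfi, hG'⟩ := exists_finiteIndex_commutator_mem H P hPH
  refine ⟨G', hn, hfi, ?_⟩
  have hcent : ∀ h ∈ G' ⊓ H, ∀ a ∈ A, h * a = a * h := by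
    intro h hh
    refine conj_trivial_of_congr A hAfg hAab hAtf h H₁.index (by omega) ?_ ?_
    · have hm : (⟨h, hh.2⟩ : H) ^ H₁.index ∈ H₁ := Subgroup.pow_index_mem H₁ _
      exact ⟨_, hm, rfl⟩
    · intro a ha
      exact hP _ (hG' h hh.1 a (hAH ha))
  let K := G' ⊓ H
  have hle : A.subgroupOf K ≤ Subgroup.center K := by
    intro a ha
    rw [Subgroup.mem_center_iff]
    intro g
    exact Subtype.ext (hcent g g.2 a ha)
  have hKi : A.relIndex K ≠ 0 := fun h0 =>
    hAk (Subgroup.relIndex_eq_zero_of_le_right inf_le_right h0)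
  have : (Subgroup.center K).FiniteIndex := by
    have : (A.subgroupOf K).FiniteIndex := ⟨hKi⟩
    exact Subgroup.finiteIndex_of_le hle
  intro x hx y hy
  let xK : K := ⟨x, hx⟩
  let yK : K := ⟨y, hy⟩
  -- `g ↦ g ^ [K : Z(K)]` is a homomorphism to an abelian group, hence kills commutators.
  have ht : (xK * yK * xK⁻¹ * yK⁻¹) ^ (Subgroup.center K).index = 1 := by
    have h1 : MonoidHom.transferCenterPow K (xK * yK * xK⁻¹ * yK⁻¹) = 1 := by
      simp only [map_mul, map_inv]
      have hc : MonoidHom.transferCenterPow K xK * MonoidHom.transferCenterPow K yK =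
          MonoidHom.transferCenterPow K yK * MonoidHom.transferCenterPow K xK :=
        Subtype.ext (Subgroup.mem_center_iff.mp (MonoidHom.transferCenterPow K yK).2 _)
      rw [hc]
      group
    have := congrArg Subtype.val h1
    rwa [MonoidHom.transferCenterPow_apply] at this
  have h1 : x * y * x⁻¹ * y⁻¹ = 1 := by
    refine hAtf _ (hPA (hG' x hx.1 y hy.2)) (Subgroup.center K).index
      (Nat.pos_of_ne_zero Subgroup.FiniteIndex.index_ne_zero) ?_
    exact congrArg Subtype.val ht
  exact mul_inv_eq_iff_eq_mul.mp (mul_inv_eq_one.mp h1)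
end

section
/- Let B be a group and A a subgroup of B such that A is contained in the center of B, A is torsion-free, A has finite index in B, and the commutator [x,y] = x y x⁻¹ y⁻¹ of any two elements x, y ∈ B lies in A (i.e., the quotient B/A is abelian). Then B is abelian. -/
/-- The Claim in the proof of Proposition 3.3.0(2): if `A` is a central,
torsion-free subgroup of finite index in `B` with `B/A` abelian (all commutators
lie in `A`), then `B` is abelian. -/
theorem stmt3 (B : Type*) [Group B] (A : Subgroup B)
    (hcentral : A ≤ Subgroup.center B)
    (htf : ∀ x ∈ A, ∀ n : ℕ, 0 < n → x ^ n = 1 → x = 1)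
    [A.FiniteIndex]
    (hcomm : ∀ x y : B, x * y * x⁻¹ * y⁻¹ ∈ A) :
    ∀ x y : B, x * y = y * x := by
  intro x y
  obtain ⟨n, hn, -, hyn⟩ := A.exists_pow_mem_of_index_ne_zero Subgroup.FiniteIndex.index_ne_zero y
  have hc := Subgroup.mem_center_iff.mp (hcentral (hcomm x y))
  have hy := Subgroup.mem_center_iff.mp (hcentral hyn)
  have hconj : x * y * x⁻¹ = (x * y * x⁻¹ * y⁻¹) * y := by group
  -- Compute `(x * y * x⁻¹) ^ n` as `x * y ^ n * x⁻¹ = y ^ n` and, since the commutator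
  -- `c` is central, as `(c * y) ^ n = c ^ n * y ^ n`; hence `c ^ n = 1`.
  have hpow : (x * y * x⁻¹ * y⁻¹) ^ n = 1 := by
    have h1 : (x * y * x⁻¹) ^ n = y ^ n := by
      rw [conj_pow, hy x, mul_inv_cancel_right]
    have hcy : Commute (x * y * x⁻¹ * y⁻¹) y := (hc y).symm
    rw [hconj, hcy.mul_pow] at h1
    exact mul_eq_right.mp h1
  have h := htf _ (hcomm x y) n hn hpow
  rwa [mul_inv_eq_one, mul_inv_eq_iff_eq_mul] at h
end

section
/- Let H be a finitely generated residually finite group, H₁ an abelian subgroup of finite index in H, and Z the centralizer of H₁ in H. Then there exists a subgroup K of H₁ which is characteristic in H₁ and of finite index in H₁, such that every h ∈ H whose conjugation action on H₁/K is trivial (i.e., such that h a h⁻¹ a⁻¹ ∈ K for all a ∈ H₁) belongs to Z·H₁, the subgroup generated by Z and H₁. -/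
/-!
Since `H₁` is abelian, `H₁ ≤ Z`, so `Z` has finite index in `H`. The conjugate `h a h⁻¹` of `a ∈ H₁`
depends only on the coset `hZ`. For each of the finitely many cosets other than `Z` some commutator
`h a h⁻¹ a⁻¹` is nontrivial, hence avoided by a finite-index subgroup of `H`; let `N` be the
intersection of these subgroups. An element `h` with all `h a h⁻¹ a⁻¹` in `N` lies in `Z`.

By Schreier's lemma `H₁` is finitely generated, so `K` can be taken to be the subgroup of `n`-th
powers of `H₁`, with `n` the index of `N ∩ H₁` in `H₁` (`exists_characteristic_le`).
-/

/-- The witness is the subgroup of `n`-th powers, `n` being the index of `N`: the quotient by it is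
a finitely generated abelian group of exponent dividing `n`, hence finite. -/
theorem exists_characteristic_le {G : Type*} [CommGroup G] [Group.FG G] (N : Subgroup G)
    [N.FiniteIndex] : ∃ K : Subgroup G, K.Characteristic ∧ K.FiniteIndex ∧ K ≤ N := by
  refine ⟨(powMonoidHom N.index : G →* G).range, ?_, ?_, ?_⟩
  · rw [Subgroup.characteristic_iff_map_le]
    rintro φ _ ⟨_, ⟨x, rfl⟩, rfl⟩
    exact ⟨φ x, by simp⟩
  · have : Finite (G ⧸ (powMonoidHom N.index : G →* G).range) := by
      apply CommGroup.finite_of_fg_torsion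
      intro q
      obtain ⟨x, rfl⟩ := QuotientGroup.mk_surjective q
      rw [isOfFinOrder_iff_pow_eq_one]
      refine ⟨N.index, Nat.pos_of_ne_zero Subgroup.FiniteIndex.index_ne_zero, ?_⟩
      rw [← QuotientGroup.mk_pow, QuotientGroup.eq_one_iff]
      exact ⟨x, rfl⟩
    exact Subgroup.finiteIndex_of_finite_quotient
  · rintro _ ⟨x, rfl⟩
    exact N.pow_index_mem x

/-- Key intermediate claim in the proof of Proposition 3.3.0(1): for `H` finitely
generated and residually finite, `H₁` an abelian finite-index subgroup with
centralizer `Z` in `H`, there is a characteristic finite-index subgroup `K` of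
`H₁` such that any `h ∈ H` acting trivially on `H₁/K` by conjugation lies in `Z·H₁`. -/
theorem stmt4 (H : Type*) [Group H] (hFG : Group.FG H)
    (hRF : ∀ h : H, h ≠ 1 → ∃ N : Subgroup H, N.Normal ∧ N.FiniteIndex ∧ h ∉ N)
    (H₁ : Subgroup H) [H₁.FiniteIndex]
    (hab : ∀ x ∈ H₁, ∀ y ∈ H₁, x * y = y * x) :
    ∃ K : Subgroup H₁, K.Characteristic ∧ K.FiniteIndex ∧
      ∀ h : H, (∀ a ∈ H₁, h * a * h⁻¹ * a⁻¹ ∈ K.map H₁.subtype) →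
        h ∈ Subgroup.centralizer (H₁ : Set H) ⊔ H₁ := by
  have hZ : H₁ ≤ Subgroup.centralizer (H₁ : Set H) := fun x hx =>
    Subgroup.mem_centralizer_iff.2 fun y hy => hab y hy x hx
  have : (Subgroup.centralizer (H₁ : Set H)).FiniteIndex := Subgroup.finiteIndex_of_le hZ
  have key : ∀ q : H ⧸ Subgroup.centralizer (H₁ : Set H), ∃ N : Subgroup H, N.FiniteIndex ∧
      ∀ h : H, (h : H ⧸ Subgroup.centralizer (H₁ : Set H)) = q →
        (∀ a ∈ H₁, h * a * h⁻¹ * a⁻¹ ∈ N) → h ∈ Subgroup.centralizer (H₁ : Set H) := by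
    intro q
    obtain ⟨r, rfl⟩ := QuotientGroup.mk_surjective q
    by_cases hr : r ∈ Subgroup.centralizer (H₁ : Set H)
    · refine ⟨⊤, inferInstance, fun h hh _ => ?_⟩
      have := mul_mem hr (inv_mem (QuotientGroup.eq.1 hh))
      simpa using this
    · have hex : ∃ a ∈ H₁, r * a * r⁻¹ * a⁻¹ ≠ 1 := by
        by_contra! hcon
        refine hr (Subgroup.mem_centralizer_iff.2 fun a ha => ?_)
        have := hcon a ha
        rw [mul_inv_eq_one, mul_inv_eq_iff_eq_mul] at this
        exact this.symm
      obtain ⟨a, ha, hne⟩ := hex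
      obtain ⟨N, -, hN, hnot⟩ := hRF _ hne
      refine ⟨N, hN, fun h hh hall => absurd ?_ hnot⟩
      -- `h` and `r` lie in the same coset of the centralizer, so they conjugate `a` identically.
      have hc := Subgroup.mem_centralizer_iff.1 (QuotientGroup.eq.1 hh) a ha
      have heq : r * a * r⁻¹ = h * a * h⁻¹ := by
        rw [mul_inv_eq_iff_eq_mul]
        calc r * a = h * ((h⁻¹ * r) * a) := by group
          _ = h * (a * (h⁻¹ * r)) := by rw [hc]
          _ = h * a * h⁻¹ * r := by group
      rw [heq]
      exact hall a ha
  choose N hN hNZ using key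
  have : (⨅ q, N q).FiniteIndex := Subgroup.finiteIndex_iInf hN
  let _ : CommGroup H₁ :=
    { (inferInstance : Group H₁) with
      mul_comm := fun x y => Subtype.ext (hab x x.2 y y.2) }
  have : Group.FG H₁ := inferInstance
  obtain ⟨K, hK, hKf, hKN⟩ := exists_characteristic_le ((⨅ q, N q).subgroupOf H₁)
  refine ⟨K, hK, hKf, fun h hh => Subgroup.mem_sup_left (hNZ _ h rfl fun a ha => ?_)⟩
  obtain ⟨k, hk, hka⟩ := hh a ha
  rw [← hka]
  exact Subgroup.mem_iInf.1 (Subgroup.mem_subgroupOf.1 (hKN hk)) _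
end
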